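/- Let F be a field of characteristic p (possibly 0) with algebraic closure F̄. Let f ∈ F[t][x₁] be square-free as an element of F̄[t][x₁], let a, b, c ∈ F[t] with gcd(a,b) = 1, and let Ψ : F[t][x₁] → F[t][x₁,x₂] be the F[t]-algebra homomorphism with Ψ(x₁) = a·x₁ + b·x₂ + c. If at least one of the following holds, then Ψ(f) is separable in t: (1) p = 0 or p > max(deg a, deg b, deg c)·deg_{x₁} f + deg_t f; (2) a ≠ 0 and b/a ∉ F(t^p). -/

import Mathlib

/-- `f ∈ F[t][x₁,…,x_d]` is separable in `t`: viewed as a univariate polynomial in `t` with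
coefficients in the rational function field `F(x₁,…,x_d)`, it is separable. -/
noncomputable def sepInT {F : Type*} [Field F] {σ : Type*}
    (f : MvPolynomial σ (Polynomial F)) : Prop :=
  Polynomial.Separable
    (MvPolynomial.eval₂
      (Polynomial.mapRingHom
        ((algebraMap (MvPolynomial σ F) (FractionRing (MvPolynomial σ F))).comp MvPolynomial.C))
      (fun i => Polynomial.C
        (algebraMap (MvPolynomial σ F) (FractionRing (MvPolynomial σ F)) (MvPolynomial.X i)))
      f)

/-- The degree in `t` of `f ∈ F[t][x]` (outer variable `x`, inner variable `t`). -/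
noncomputable def degTP {F : Type*} [CommRing F] (f : Polynomial (Polynomial F)) : ℕ :=
  f.support.sup fun i => (f.coeff i).natDegree

/-- The condition that the rational function `b/a ∈ F(t)` does not lie in the subfield
`F(t^p)` generated over (the image of) `F` by `t^p`, where `p = ringChar F`. -/
def notInFtp (F : Type*) [Field F] (a b : Polynomial F) : Prop :=
  (algebraMap (Polynomial F) (RatFunc F)) b / (algebraMap (Polynomial F) (RatFunc F)) a ∉
    Subfield.closure (Set.range (RatFunc.C (K := F)) ∪ {RatFunc.X ^ ringChar F})

/-!
By Gauss's lemma it suffices that every irreducible factor `g` of `Ψ(f)` with `∂g/∂t = 0` has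
degree `0` in `t`. Under (1) this holds because `deg_t Ψ(f) < p`. As `gcd(a, b) = 1`, the image of
`Ψ` is the factor `F[t][Ψ(x₁)]` of a change of variables of `F[t][x₁, x₂]`, so `g = Ψ(q)` for some
`q ∣ f`, and `∂Ψ(q)/∂t = Ψ(∂q/∂t) + Ψ(∂q/∂x₁) · (a' x₁ + b' x₂ + c')`. The derivation `b ∂₁ - a ∂₂`
annihilates the image of `Ψ` and sends the last factor to `a' b - a b'`, which under (2) is nonzero.
Hence `∂q/∂x₁ = ∂q/∂t = 0`, and `q` becomes a `p`-th power over `F̄`, which is impossible for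
a nonunit factor of a square-free polynomial (for `p = 0`, (1) applies anyway).
-/

section

open Polynomial

section Reflect

theorem squarefree_of_squarefree_map {M N G : Type*} [Monoid M] [Monoid N] [FunLike G M N]
    [MonoidHomClass G M N] (φ : G) [IsLocalHom φ] {r : M} (h : Squarefree (φ r)) :
    Squarefree r :=
  fun x hx => (h (φ x) (map_mul φ x x ▸ map_dvd φ hx)).of_map

theorem isLocalHom_mapRingHom {R S : Type*} [CommRing R] [CommRing S] (j : R →+* S) [IsLocalHom j]
    (hj : Function.Injective j) : IsLocalHom (mapRingHom j) where
  map_nonunit q hq := by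
    rw [coe_mapRingHom, isUnit_iff_coeff_isUnit_isNilpotent] at hq
    simp only [coeff_map, IsNilpotent.map_iff hj] at hq
    exact isUnit_iff_coeff_isUnit_isNilpotent.2 ⟨hq.1.of_map, hq.2⟩

theorem isLocalHom_mapRingHom_mapRingHom {R S : Type*} [CommRing R] [CommRing S] (j : R →+* S)
    [IsLocalHom j] (hj : Function.Injective j) : IsLocalHom (mapRingHom (mapRingHom j)) :=
  have := isLocalHom_mapRingHom j hj
  isLocalHom_mapRingHom (mapRingHom j) (Polynomial.map_injective j hj)

theorem squarefree_of_squarefree_map_mapRingHom {R S : Type*} [CommRing R] [CommRing S]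
    (j : R →+* S) [IsLocalHom j] (hj : Function.Injective j) {f : R[X][X]}
    (hf : Squarefree (f.map (mapRingHom j))) : Squarefree f :=
  have := isLocalHom_mapRingHom_mapRingHom j hj
  squarefree_of_squarefree_map (mapRingHom (mapRingHom j)) hf

end Reflect

section FractionMap

variable {R K : Type*} [CommRing R] [Field K] [Algebra R K] [IsFractionRing R K]

theorem isUnit_fraction_map_of_natDegree_eq_zero {q : R[X]} (hq : q ≠ 0) (hdeg : q.natDegree = 0) :
    IsUnit (q.map (algebraMap R K)) := by
  rw [isUnit_iff_degree_eq_zero, degree_map_eq_of_injective (IsFractionRing.injective R K),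
    degree_eq_natDegree hq, hdeg, Nat.cast_zero]

variable [IsDomain R]

theorem isCoprime_fraction_map_of_not_dvd [IsGCDMonoid R] {q g : R[X]} (hq : Irreducible q)
    (hqg : ¬q ∣ g) : IsCoprime (q.map (algebraMap R K)) (g.map (algebraMap R K)) := by
  by_cases hdeg : q.natDegree = 0
  · exact isCoprime_one_left.of_isCoprime_of_dvd_left
      (isUnit_fraction_map_of_natDegree_eq_zero hq.ne_zero hdeg).dvd
  · have hprim := hq.isPrimitive hdeg
    have hirr := (hprim.irreducible_iff_irreducible_map_fraction_map (K := K)).1 hq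
    exact hirr.coprime_iff_not_dvd.2 (mt hprim.dvd_of_fraction_map_dvd_fraction_map hqg)

theorem separable_fraction_map_of_irreducible [IsGCDMonoid R] {q : R[X]} (hq : Irreducible q)
    (hder : derivative q = 0 → q.natDegree = 0) : (q.map (algebraMap R K)).Separable := by
  by_cases hdeg : q.natDegree = 0
  · exact separable_one.of_dvd (isUnit_fraction_map_of_natDegree_eq_zero hq.ne_zero hdeg).dvd
  · have hirr := ((hq.isPrimitive hdeg).irreducible_iff_irreducible_map_fraction_map (K := K)).1 hq
    rw [separable_iff_derivative_ne_zero hirr, derivative_map,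
      Polynomial.map_ne_zero_iff (IsFractionRing.injective R K)]
    exact mt hder hdeg

theorem separable_fraction_map_of_squarefree [UniqueFactorizationMonoid R] {g : R[X]}
    (hg : Squarefree g) (hder : ∀ q, Irreducible q → q ∣ g → derivative q = 0 → q.natDegree = 0) :
    (g.map (algebraMap R K)).Separable := by
  induction g using UniqueFactorizationMonoid.induction_on_prime with
  | h₁ => exact absurd hg not_squarefree_zero
  | h₂ u hu => exact separable_one.of_dvd (hu.map (mapRingHom (algebraMap R K))).dvd
  | h₃ g q _ hq ih =>
    have hqg : ¬q ∣ g := fun hdvd => hq.not_isUnit (hg q (mul_dvd_mul_left q hdvd))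
    rw [Polynomial.map_mul]
    refine .mul (separable_fraction_map_of_irreducible hq.irreducible
      (hder q hq.irreducible (dvd_mul_right q g))) (ih hg.of_mul_right fun r hr hrg => ?_)
      (isCoprime_fraction_map_of_not_dvd hq.irreducible hqg)
    exact hder r hr (hrg.mul_left q)

end FractionMap

section Derivative

theorem natDegree_eq_zero_of_derivative_eq_zero_of_lt {R : Type*} [CommRing R] [NoZeroDivisors R]
    {p : ℕ} [CharP R p] {f : R[X]} (hp : p = 0 ∨ f.natDegree < p) (hf : derivative f = 0) :
    f.natDegree = 0 := by
  rcases hp with rfl | hlt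
  · have := CharP.charP_to_charZero R
    exact derivative_eq_zero.1 hf
  · rw [← expand_contract p hf (by lia), natDegree_expand] at hlt ⊢
    rw [Nat.lt_one_iff.1 (Nat.lt_of_mul_lt_mul_right (hlt.trans_eq (one_mul p).symm)), zero_mul]

theorem mem_range_frobenius_of_derivative_eq_zero {R : Type*} [CommRing R] [NoZeroDivisors R]
    (p : ℕ) [ExpChar R p] {f : R[X]} (hf : derivative f = 0)
    (hcoeff : ∀ n, f.coeff n ∈ Set.range (frobenius R p)) : f ∈ Set.range (frobenius R[X] p) := by
  obtain ⟨g, hg⟩ : contract p f ∈ Set.range (map (frobenius R p)) := by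
    rw [← lifts_iff_set_range, lifts_iff_coeff_lifts]
    intro n
    rw [coeff_contract (expChar_ne_zero R p)]
    exact hcoeff _
  exact ⟨g, by rw [frobenius_def, ← map_frobenius_expand, map_expand, hg, expand_contract' p hf]⟩

/-- The derivative with respect to the inner variable `t` of `R[t][x]`, that is,
differentiation of the coefficients. -/
noncomputable def coeffDerivative {R : Type*} [CommRing R] : Derivation R R[X][X] R[X][X] :=
  PolynomialModule.equivPolynomialSelf.compDer derivative'.mapCoeffs

theorem coeff_coeffDerivative {R : Type*} [CommRing R] (q : R[X][X]) (n : ℕ) :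
    (coeffDerivative q).coeff n = derivative (q.coeff n) :=
  rfl

theorem coeffDerivative_monomial {R : Type*} [CommRing R] (n : ℕ) (h : R[X]) :
    coeffDerivative (monomial n h) = monomial n (derivative h) := by
  ext1 m
  rw [coeff_coeffDerivative, coeff_monomial, coeff_monomial, apply_ite derivative, derivative_zero]

theorem map_mem_range_frobenius_of_derivative_eq_zero {R S : Type*} [CommRing R] [CommRing S]
    [NoZeroDivisors S] (p : ℕ) [ExpChar S p] [PerfectRing S p] (j : R →+* S) {q : R[X][X]}
    (hx : derivative q = 0) (ht : coeffDerivative q = 0) :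
    q.map (mapRingHom j) ∈ Set.range (frobenius S[X][X] p) := by
  refine mem_range_frobenius_of_derivative_eq_zero p
    (by rw [derivative_map, hx, Polynomial.map_zero]) fun n => ?_
  rw [coeff_map, coe_mapRingHom]
  refine mem_range_frobenius_of_derivative_eq_zero p ?_ fun m => surjective_frobenius S p _
  rw [derivative_map, ← coeff_coeffDerivative, ht, coeff_zero, Polynomial.map_zero]

theorem isUnit_of_dvd_of_derivative_eq_zero {R S : Type*} [CommRing R] [CommRing S]
    [NoZeroDivisors S] (p : ℕ) [Fact p.Prime] [CharP S p] [PerfectRing S p] (j : R →+* S)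
    [IsLocalHom j] (hj : Function.Injective j) {f q : R[X][X]}
    (hf : Squarefree (f.map (mapRingHom j))) (hqf : q ∣ f)
    (hx : derivative q = 0) (ht : coeffDerivative q = 0) : IsUnit q := by
  obtain ⟨r, hr⟩ := map_mem_range_frobenius_of_derivative_eq_zero p j hx ht
  rw [frobenius_def] at hr
  have hrr : r * r ∣ f.map (mapRingHom j) := by
    rw [← pow_two]
    exact (pow_dvd_pow r (Fact.out : p.Prime).two_le).trans (hr ▸ Polynomial.map_dvd _ hqf)
  have := isLocalHom_mapRingHom_mapRingHom j hj
  refine IsUnit.of_map (mapRingHom (mapRingHom j)) q ?_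
  rw [coe_mapRingHom, ← hr]
  exact (hf r hrr).pow p

end Derivative

section LinSubst

open MvPolynomial (pderiv)

variable {R : Type*} [CommRing R]

/-- The (inhomogeneous) linear form `a x₁ + b x₂ + c` that is substituted for `x₁`. -/
noncomputable def linForm (a b c : R) : MvPolynomial (Fin 2) R :=
  MvPolynomial.C a * MvPolynomial.X 0 + MvPolynomial.C b * MvPolynomial.X 1 + MvPolynomial.C c

/-- The substitution `x₁ ↦ a x₁ + b x₂ + c`, called `Ψ` in the paper (with `R = F[t]`). -/
noncomputable def linSubst (a b c : R) : R[X] →ₐ[R] MvPolynomial (Fin 2) R :=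
  aeval (linForm a b c)

/-- If `u a + v b = 1`, then `linSubst a b c` extends to an isomorphism of `R[x][y]` with
`R[x₁, x₂]`, sending `y` to `u x₂ - v x₁`. -/
noncomputable def linSubstEquiv {a b u v : R} (c : R) (h : u * a + v * b = 1) :
    R[X][X] ≃ₐ[R] MvPolynomial (Fin 2) R :=
  AlgEquiv.ofAlgHom
    (aevalAeval (linForm a b c)
      (MvPolynomial.C u * MvPolynomial.X 1 - MvPolynomial.C v * MvPolynomial.X 0))
    (MvPolynomial.aeval ![C (C u) * (C X - C (C c)) - C (C b) * X,
      C (C v) * (C X - C (C c)) + C (C a) * X])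
    (by
      have hC := congrArg (MvPolynomial.C (σ := Fin 2)) h
      ext1 i
      fin_cases i
      · linear_combination (norm := (simp [linForm]; ring)) MvPolynomial.X 0 * hC
      · linear_combination (norm := (simp [linForm]; ring)) MvPolynomial.X 1 * hC)
    (by
      have hC : (C (C (u * a + v * b)) : R[X][X]) = C (C 1) := by rw [h]
      ext1
      · ext1
        linear_combination (norm := (simp [linForm]; ring)) (C X - C (C c)) * hC
      · linear_combination (norm := (simp; ring)) X * hC)

theorem linSubstEquiv_C {a b u v : R} (c : R) (h : u * a + v * b = 1) (q : R[X]) :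
    linSubstEquiv c h (C q) = linSubst a b c q :=
  aevalAeval_C _ _ q

theorem linSubst_injective {a b : R} (c : R) (hab : IsCoprime a b) :
    Function.Injective (linSubst a b c) := by
  obtain ⟨u, v, h⟩ := hab
  intro q r hqr
  rw [← linSubstEquiv_C c h, ← linSubstEquiv_C c h] at hqr
  exact C_injective ((linSubstEquiv c h).injective hqr)

theorem exists_linSubst_eq_of_dvd [NoZeroDivisors R] {a b : R} (c : R) (hab : IsCoprime a b)
    {f : R[X]} (hf : f ≠ 0) {g : MvPolynomial (Fin 2) R} (hg : g ∣ linSubst a b c f) :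
    ∃ q, q ∣ f ∧ linSubst a b c q = g := by
  obtain ⟨u, v, h⟩ := hab
  have hdvd : (linSubstEquiv c h).symm g ∣ C f := by
    rwa [← linSubstEquiv_C c h, ← (linSubstEquiv c h).apply_symm_apply g, map_dvd_iff] at hg
  obtain ⟨q, hq⟩ := natDegree_eq_zero.1
    (Nat.le_zero.1 (natDegree_C f ▸ natDegree_le_of_dvd hdvd (C_ne_zero.2 hf)))
  refine ⟨q, coeff_C_zero (a := f) ▸ (C_dvd_iff_dvd_coeff q _).1 (hq ▸ hdvd) 0, ?_⟩
  rw [← linSubstEquiv_C c h, hq, AlgEquiv.apply_symm_apply]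

theorem squarefree_linSubst [IsDomain R] {a b : R} (c : R) (hab : IsCoprime a b) {f : R[X]}
    (hf : Squarefree f) : Squarefree (linSubst a b c f) := by
  intro g hg
  obtain ⟨q, -, rfl⟩ := exists_linSubst_eq_of_dvd c hab hf.ne_zero ((dvd_mul_left _ _).trans hg)
  obtain ⟨r, hr, hqr⟩ := exists_linSubst_eq_of_dvd c hab hf.ne_zero hg
  rw [← map_mul] at hqr
  exact (hf q (linSubst_injective c hab hqr ▸ hr)).map _

/-- The `R`-derivation `b ∂₁ - a ∂₂` of `R[x₁, x₂]`, which annihilates `a x₁ + b x₂ + c`. -/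
noncomputable def annihilatingDerivation (a b : R) :
    Derivation R (MvPolynomial (Fin 2) R) (MvPolynomial (Fin 2) R) :=
  b • pderiv 0 - a • pderiv 1

theorem annihilatingDerivation_linForm (a b a' b' c' : R) :
    annihilatingDerivation a b (linForm a' b' c') = MvPolynomial.C (b * a' - a * b') := by
  simp [annihilatingDerivation, linForm, MvPolynomial.smul_eq_C_mul]

theorem annihilatingDerivation_linSubst (a b c : R) (q : R[X]) :
    annihilatingDerivation a b (linSubst a b c q) = 0 := by
  rw [linSubst, Derivation.map_aeval, annihilatingDerivation_linForm, mul_comm, sub_self, map_zero,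
    smul_zero]

theorem eq_zero_of_linSubst_add_mul_linForm_eq_zero [IsDomain R] {a b c a' b' c' : R}
    (hab : IsCoprime a b) (hdet : a * b' - a' * b ≠ 0) {r s : R[X]}
    (h : linSubst a b c r + linSubst a b c s * linForm a' b' c' = 0) : r = 0 ∧ s = 0 := by
  have hinj := linSubst_injective c hab
  have hs : s = 0 := by
    have hD := congrArg (annihilatingDerivation a b) h
    rw [map_add, Derivation.leibniz, annihilatingDerivation_linSubst,
      annihilatingDerivation_linSubst, annihilatingDerivation_linForm, smul_zero, add_zero,
      zero_add, map_zero, smul_eq_mul] at hD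
    refine (map_eq_zero_iff _ hinj).1 ((mul_eq_zero.1 hD).resolve_right ?_)
    refine mt MvPolynomial.C_eq_zero.1 fun h0 => hdet ?_
    linear_combination -h0
  subst hs
  rw [map_zero, zero_mul, add_zero] at h
  exact ⟨(map_eq_zero_iff _ hinj).1 h, rfl⟩

end LinSubst

section MvSwap

variable {R σ : Type*} [CommRing R]

/-- The isomorphism of `R[t][x]` with `R[x][t]`, for a family of variables `x`, through which
polynomials in `x` over `R[t]` are viewed as univariate polynomials in `t`. -/
noncomputable def mvSwap : MvPolynomial σ R[X] ≃ₐ[R] (MvPolynomial σ R)[X] :=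
  (MvPolynomial.optionEquivRight R σ).symm.trans (MvPolynomial.optionEquivLeft R σ)

theorem mvSwap_X (i : σ) :
    mvSwap (MvPolynomial.X i : MvPolynomial σ R[X]) = C (MvPolynomial.X i) := by
  simp [mvSwap]

theorem mvSwap_C (h : R[X]) :
    mvSwap (MvPolynomial.C h : MvPolynomial σ R[X]) = h.map MvPolynomial.C := by
  have hcomp : (mvSwap (R := R) (σ := σ) : MvPolynomial σ R[X] →+* (MvPolynomial σ R)[X]).comp
      MvPolynomial.C = mapRingHom MvPolynomial.C := by
    ext <;> simp [mvSwap]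
  exact RingHom.congr_fun hcomp h

theorem sepInT_iff_separable_map_mvSwap {F : Type*} [Field F] {g : MvPolynomial σ F[X]} :
    sepInT g ↔
      ((mvSwap g).map (algebraMap _ (FractionRing (MvPolynomial σ F)))).Separable := by
  rw [sepInT]
  congr! 1
  induction g using MvPolynomial.induction_on with
  | C h => rw [MvPolynomial.eval₂_C, mvSwap_C, Polynomial.map_map, coe_mapRingHom]
  | add g h hg hh => rw [MvPolynomial.eval₂_add, hg, hh, map_add, Polynomial.map_add]
  | mul_X g i hg => rw [MvPolynomial.eval₂_mul, MvPolynomial.eval₂_X, hg, map_mul, mvSwap_X,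
      Polynomial.map_mul, map_C]

theorem mvSwap_linForm (a b c : R[X]) : mvSwap (linForm a b c) =
    a.map MvPolynomial.C * C (MvPolynomial.X 0) + b.map MvPolynomial.C * C (MvPolynomial.X 1) +
      c.map MvPolynomial.C := by
  simp only [linForm, map_add, map_mul, mvSwap_C, mvSwap_X]

theorem derivative_mvSwap_linForm (a b c : R[X]) : derivative (mvSwap (linForm a b c)) =
    mvSwap (linForm (derivative a) (derivative b) (derivative c)) := by
  simp only [mvSwap_linForm, derivative_add, derivative_mul, derivative_map, derivative_C,
    mul_zero, add_zero]

theorem mvSwap_linSubst_monomial (a b c h : R[X]) (n : ℕ) :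
    mvSwap (linSubst a b c (monomial n h)) =
      h.map MvPolynomial.C * mvSwap (linForm a b c) ^ n := by
  rw [linSubst, aeval_monomial, map_mul, map_pow, MvPolynomial.algebraMap_eq, mvSwap_C]

theorem derivative_mvSwap_linSubst (a b c : R[X]) (q : R[X][X]) :
    derivative (mvSwap (linSubst a b c q)) =
      mvSwap (linSubst a b c (coeffDerivative q) + linSubst a b c (derivative q) *
        linForm (derivative a) (derivative b) (derivative c)) := by
  induction q using Polynomial.induction_on' with
  | add q r hq hr =>
    simp only [map_add, add_mul, hq, hr]
    abel
  | monomial n h =>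
    rw [map_add, map_mul, coeffDerivative_monomial, derivative_monomial]
    simp only [mvSwap_linSubst_monomial, derivative_mul, derivative_map, derivative_pow,
      derivative_mvSwap_linForm, Polynomial.map_mul, Polynomial.map_natCast, map_natCast]
    ring

theorem natDegree_mvSwap_linForm_le (a b c : R[X]) :
    (mvSwap (linForm a b c)).natDegree ≤ max (max a.natDegree b.natDegree) c.natDegree := by
  rw [mvSwap_linForm]
  refine natDegree_add_le_of_le (natDegree_add_le_of_le ?_ ?_) natDegree_map_le
  · exact (natDegree_mul_C_le _ _).trans natDegree_map_le
  · exact (natDegree_mul_C_le _ _).trans natDegree_map_le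

theorem natDegree_mvSwap_linSubst_le (a b c : R[X]) (f : R[X][X]) :
    (mvSwap (linSubst a b c f)).natDegree ≤
      max (max a.natDegree b.natDegree) c.natDegree * f.natDegree + degTP f := by
  rw [f.as_sum_support, map_sum, map_sum, ← f.as_sum_support]
  refine natDegree_sum_le_of_forall_le _ _ fun n hn => ?_
  rw [mvSwap_linSubst_monomial, add_comm, mul_comm _ f.natDegree]
  refine natDegree_mul_le_of_le (natDegree_map_le.trans ?_) (natDegree_pow_le.trans ?_)
  · exact Finset.le_sup (f := fun i => (f.coeff i).natDegree) hn
  · exact Nat.mul_le_mul (le_natDegree_of_mem_supp n hn) (natDegree_mvSwap_linForm_le a b c)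

end MvSwap

section Separability

variable {F : Type*} [Field F]

theorem algebraMap_mem_of_derivative_eq_zero {L : Subfield (RatFunc F)}
    (hC : Set.range RatFunc.C ⊆ (L : Set (RatFunc F))) (hX : RatFunc.X ^ ringChar F ∈ L) {g : F[X]}
    (hg : derivative g = 0) : algebraMap F[X] (RatFunc F) g ∈ L := by
  by_cases hp : ringChar F = 0
  · have := (CharP.ringChar_zero_iff_CharZero F).1 hp
    rw [eq_C_of_derivative_eq_zero hg, RatFunc.algebraMap_C]
    exact hC (Set.mem_range_self _)
  · rw [← expand_contract (ringChar F) hg hp, expand_eq_sum, Polynomial.sum_def, map_sum]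
    refine sum_mem fun i _ => ?_
    rw [map_mul, map_pow, map_pow, RatFunc.algebraMap_C, RatFunc.algebraMap_X]
    exact mul_mem (hC (Set.mem_range_self _)) (pow_mem hX _)

theorem wronskian_ne_zero_of_notInFtp {a b : F[X]} (hab : IsCoprime a b) (h : notInFtp F a b) :
    wronskian a b ≠ 0 := by
  intro hw
  obtain ⟨ha, hb⟩ := hab.wronskian_eq_zero_iff.1 hw
  obtain ⟨hC, hX⟩ := Set.union_subset_iff.1 (Subfield.subset_closure
    (s := Set.range (RatFunc.C (K := F)) ∪ {RatFunc.X ^ ringChar F}))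
  rw [Set.singleton_subset_iff] at hX
  exact h (div_mem (algebraMap_mem_of_derivative_eq_zero hC hX hb)
    (algebraMap_mem_of_derivative_eq_zero hC hX ha))

theorem sepInT_linSubst_of_forall_dvd {a b : F[X]} (c : F[X]) (hab : IsCoprime a b) {f : F[X][X]}
    (hf : Squarefree f)
    (hder : ∀ q, q ∣ f → ¬IsUnit q → derivative (mvSwap (linSubst a b c q)) = 0 →
      (mvSwap (linSubst a b c q)).natDegree = 0) :
    sepInT (linSubst a b c f) := by
  rw [sepInT_iff_separable_map_mvSwap]
  refine separable_fraction_map_of_squarefree ?_ fun g hg hgf hg' => ?_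
  · apply squarefree_of_squarefree_map mvSwap.symm
    rw [AlgEquiv.symm_apply_apply]
    exact squarefree_linSubst c hab hf
  · obtain ⟨g, rfl⟩ := mvSwap.surjective g
    rw [map_dvd_iff] at hgf
    obtain ⟨q, hqf, rfl⟩ := exists_linSubst_eq_of_dvd c hab hf.ne_zero hgf
    exact hder q hqf (fun hq => hg.not_isUnit ((hq.map _).map mvSwap)) hg'

theorem sepInT_linSubst_of_degree_lt {a b c : F[X]} (hab : IsCoprime a b) {f : F[X][X]}
    (hf : Squarefree f) (hp : ringChar F = 0 ∨
      max (max a.natDegree b.natDegree) c.natDegree * f.natDegree + degTP f < ringChar F) :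
    sepInT (linSubst a b c f) := by
  refine sepInT_linSubst_of_forall_dvd c hab hf fun q hqf _ hq => ?_
  refine natDegree_eq_zero_of_derivative_eq_zero_of_lt (p := ringChar F)
    (hp.imp_right fun hlt => ?_) hq
  have hne : mvSwap (linSubst a b c f) ≠ 0 :=
    (map_ne_zero_iff _ mvSwap.injective).2
      ((map_ne_zero_iff _ (linSubst_injective c hab)).2 hf.ne_zero)
  exact (natDegree_le_of_dvd (map_dvd mvSwap (map_dvd (linSubst a b c) hqf)) hne).trans_lt
    ((natDegree_mvSwap_linSubst_le a b c f).trans_lt hlt)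

theorem sepInT_linSubst_of_wronskian_ne_zero {E : Type*} [Field E] [PerfectField E] (j : F →+* E)
    {a b : F[X]} (c : F[X]) (hab : IsCoprime a b) (hw : wronskian a b ≠ 0) {f : F[X][X]}
    (hf : Squarefree (f.map (mapRingHom j))) : sepInT (linSubst a b c f) := by
  have hfF : Squarefree f := squarefree_of_squarefree_map_mapRingHom j j.injective hf
  by_cases hp : ringChar F = 0
  · exact sepInT_linSubst_of_degree_lt hab hfF (.inl hp)
  have : Fact (ringChar F).Prime := ⟨(CharP.char_is_prime_or_zero F _).resolve_right hp⟩
  have : CharP E (ringChar F) := charP_of_injective_ringHom j.injective _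
  have : PerfectRing E (ringChar F) := PerfectField.toPerfectRing _
  refine sepInT_linSubst_of_forall_dvd c hab hfF fun q hqf hqu hq => ?_
  rw [derivative_mvSwap_linSubst, map_eq_zero_iff _ mvSwap.injective] at hq
  obtain ⟨ht, hx⟩ := eq_zero_of_linSubst_add_mul_linForm_eq_zero hab hw hq
  exact absurd (isUnit_of_dvd_of_derivative_eq_zero (ringChar F) j j.injective hf hqf hx ht) hqu

end Separability

theorem linear_subst_sepInT_general {F E : Type*} [Field F] [Field E] [PerfectField E]
    (j : F →+* E) {f : F[X][X]} {a b c : F[X]} (hab : IsCoprime a b)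
    (h : (Squarefree f ∧ (ringChar F = 0 ∨
        max (max a.natDegree b.natDegree) c.natDegree * f.natDegree + degTP f < ringChar F)) ∨
      (Squarefree (f.map (mapRingHom j)) ∧ notInFtp F a b)) :
    sepInT (linSubst a b c f) := by
  rcases h with ⟨hf, hp⟩ | ⟨hf, hnot⟩
  · exact sepInT_linSubst_of_degree_lt hab hf hp
  · exact sepInT_linSubst_of_wronskian_ne_zero j c hab (wronskian_ne_zero_of_notInFtp hab hnot) hf

end

/-- Let `F` be a field of characteristic `p` (possibly `0`),
`f ∈ F[t][x₁]` square-free over the algebraic closure, `a, b, c ∈ F[t]` with `gcd(a,b) = 1`,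
and let `Ψ : F[t][x₁] → F[t][x₁,x₂]` be the `F[t]`-homomorphism `x₁ ↦ a·x₁ + b·x₂ + c`.
If `p = 0` or `p > max(deg a, deg b, deg c)·deg_{x₁} f + deg_t f`, or `a ≠ 0` and
`b/a ∉ F(t^p)`, then `Ψ(f)` is separable in `t`. -/
theorem linear_subst_sepInT (F : Type*) [Field F]
    (f : Polynomial (Polynomial F))
    (hf : Squarefree
      (Polynomial.map (Polynomial.mapRingHom (algebraMap F (AlgebraicClosure F))) f))
    (a b c : Polynomial F) (hab : IsRelPrime a b)
    (hcond :
      (ringChar F = 0 ∨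
        max (max a.natDegree b.natDegree) c.natDegree * f.natDegree + degTP f < ringChar F) ∨
      (a ≠ 0 ∧ notInFtp F a b)) :
    sepInT
      (Polynomial.eval₂ MvPolynomial.C
        (MvPolynomial.C a * MvPolynomial.X 0 + MvPolynomial.C b * MvPolynomial.X 1 +
          MvPolynomial.C c) f : MvPolynomial (Fin 2) (Polynomial F)) :=
  linear_subst_sepInT_general (algebraMap F (AlgebraicClosure F)) hab.isCoprime
    (hcond.imp (⟨squarefree_of_squarefree_map_mapRingHom _ (algebraMap F _).injective hf, ·⟩)
      (⟨hf, ·.2⟩))
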